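/- Let p ∈ (0,1/2], r ∈ ℕ with r ≥ 1, and δ > 0. Suppose f : {0,1}^n → {0,1} satisfies I_S(f) ≤ δ for every nonempty S ⊆ [n] with |S| ≤ r. Then f is (r, 4^r·δ)-global. -/

import Mathlib

open Finset

namespace GlobalHC

variable {n : ℕ}

/-- Expectation with respect to the `p`-biased measure on `{0,1}^n`. -/
noncomputable def Ep (p : ℝ) (f : (Fin n → Bool) → ℝ) : ℝ :=
  ∑ x : Fin n → Bool, (∏ i, if x i then p else 1 - p) * f x

/-- The `r`-norm with respect to the `p`-biased measure. -/
noncomputable def pnorm (p r : ℝ) (f : (Fin n → Bool) → ℝ) : ℝ :=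
  (Ep p fun x => |f x| ^ r) ^ (1 / r)

/-- The `p`-biased character `χ_S`. -/
noncomputable def chi (p : ℝ) (S : Finset (Fin n)) (x : Fin n → Bool) : ℝ :=
  ∏ i ∈ S, ((if x i then (1 : ℝ) else 0) - p) / Real.sqrt (p * (1 - p))

/-- The `p`-biased Fourier coefficient `f̂(S)`. -/
noncomputable def coeff (p : ℝ) (f : (Fin n → Bool) → ℝ) (S : Finset (Fin n)) : ℝ :=
  Ep p fun x => f x * chi p S x

/-- The derivative `D_S f = Σ_{T ⊇ S} f̂(T) χ_{T∖S}`. -/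
noncomputable def derivS (p : ℝ) (S : Finset (Fin n)) (f : (Fin n → Bool) → ℝ) :
    (Fin n → Bool) → ℝ :=
  fun x => ∑ T ∈ Finset.univ.filter (fun T => S ⊆ T), coeff p f T * chi p (T \ S) x

/-- The generalised influence `I_S(f) = σ^{-2|S|} Σ_{T ⊇ S} f̂(T)²`. -/
noncomputable def genInf (p : ℝ) (S : Finset (Fin n)) (f : (Fin n → Bool) → ℝ) : ℝ :=
  (∑ T ∈ Finset.univ.filter (fun T => S ⊆ T), coeff p f T ^ 2) / (p * (1 - p)) ^ S.card

/-- The noise operator `T_ρ f = Σ_S ρ^{|S|} f̂(S) χ_S`. -/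
noncomputable def noise (p ρ : ℝ) (f : (Fin n → Bool) → ℝ) : (Fin n → Bool) → ℝ :=
  fun x => ∑ S : Finset (Fin n), ρ ^ S.card * coeff p f S * chi p S x

/-- The degree-`r` truncation `f^{≤ r}`. -/
noncomputable def trunc (p : ℝ) (r : ℕ) (f : (Fin n → Bool) → ℝ) : (Fin n → Bool) → ℝ :=
  fun x => ∑ S ∈ Finset.univ.filter (fun S : Finset (Fin n) => S.card ≤ r),
    coeff p f S * chi p S x

/-- The restriction `f_{J→1}` setting all coordinates in `J` to `1`. -/
def restrict1 (J : Finset (Fin n)) (f : (Fin n → Bool) → ℝ) : (Fin n → Bool) → ℝ :=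
  fun x => f (fun i => if i ∈ J then true else x i)

/-- `f` is `(r,δ)`-global (for the `p`-biased measure). -/
def IsGlobal (p r δ : ℝ) (f : (Fin n → Bool) → ℝ) : Prop :=
  ∀ J : Finset (Fin n), (J.card : ℝ) ≤ r → Ep p (restrict1 J f) ≤ Ep p f + δ

/-- The total influence `I[f] = Σ_i Pr_{μ_p}[f(x ⊕ e_i) ≠ f(x)]`. -/
noncomputable def totalInf (p : ℝ) (f : (Fin n → Bool) → ℝ) : ℝ :=
  ∑ i : Fin n, Ep p fun x => if f (Function.update x i (!x i)) = f x then 0 else 1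

/-- Noise stability `Stab_ρ(f) = Σ_S ρ^{|S|} f̂(S)²` (w.r.t. `μ_p`). -/
noncomputable def stab (p ρ : ℝ) (f : (Fin n → Bool) → ℝ) : ℝ :=
  ∑ S : Finset (Fin n), ρ ^ S.card * coeff p f S ^ 2

/-- `f` is monotone. -/
def Mono (f : (Fin n → Bool) → ℝ) : Prop :=
  ∀ x y : Fin n → Bool, (∀ i, x i ≤ y i) → f x ≤ f y


/-- The weight of a point. -/
noncomputable def wt (p : ℝ) (x : Fin n → Bool) : ℝ := ∏ i, if x i then p else 1 - p

theorem wt_update (p : ℝ) (x : Fin n → Bool) (i : Fin n) (b : Bool) :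
    (if x i then p else 1 - p) * wt p (Function.update x i b)
      = (if b then p else 1 - p) * wt p x := by
  unfold wt
  rw [← Finset.mul_prod_erase univ _ (mem_univ i),
    ← Finset.mul_prod_erase univ (fun j => if x j then p else 1 - p) (mem_univ i)]
  have : ∏ j ∈ univ.erase i, (if Function.update x i b j then p else 1 - p)
      = ∏ j ∈ univ.erase i, (if x j then p else 1 - p) := by
    apply Finset.prod_congr rfl
    intro j hj
    rw [Function.update_of_ne (Finset.ne_of_mem_erase hj)]
  rw [this]
  simp only [Function.update_self]
  ring

theorem flip_zero (G : (Fin n → Bool) → ℝ) (i : Fin n)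
    (h : ∀ x, x i = true → G x + G (Function.update x i false) = 0) : ∑ x, G x = 0 := by
  apply Finset.sum_involution (fun x _ => Function.update x i (!x i))
  · intro x _
    cases hx : x i
    · have := h (Function.update x i true) (by simp)
      rw [Function.update_idem] at this
      have e : Function.update x i false = x := by rw [← hx]; simp
      rw [e] at this
      simp; linarith
    · simpa using h x hx
  · intro x _ _ he
    have := congrFun he i
    simp at this
  · intro x _; simp
  · intro x _; exact mem_univ _

theorem chi_update (p : ℝ) (T : Finset (Fin n)) (x : Fin n → Bool) (i : Fin n) (b : Bool)
    (hi : i ∉ T) : chi p T (Function.update x i b) = chi p T x := by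
  unfold chi
  apply Finset.prod_congr rfl
  intro j hj
  rw [Function.update_of_ne]
  rintro rfl; exact hi hj

theorem wt_false {p : ℝ} (hp : 0 < p) (x : Fin n → Bool) (i : Fin n) (hx : x i = true) :
    wt p (Function.update x i false) = (1 - p) * wt p x / p := by
  have := wt_update p x i false
  simp [hx] at this
  field_simp
  linarith

theorem update_true_self (x : Fin n → Bool) (i : Fin n) (hx : x i = true) :
    Function.update x i true = x := by
  rw [← hx]; simp

theorem Ep_upd_true {p : ℝ} (hp : 0 < p) (h : (Fin n → Bool) → ℝ) (i : Fin n) :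
    Ep p (fun x => h (Function.update x i true))
      = Ep p (fun x => h x * ((if x i then (1 : ℝ) else 0) / p)) := by
  rw [← sub_eq_zero]
  unfold Ep
  rw [← Finset.sum_sub_distrib]
  apply flip_zero _ i
  intro x hx
  change (wt p x * _ - wt p x * _) + (wt p (Function.update x i false) * _
    - wt p (Function.update x i false) * _) = 0
  beta_reduce
  rw [wt_false hp x i hx, update_true_self x i hx, Function.update_idem, update_true_self x i hx]
  simp [hx]
  field_simp
  ring

theorem Ep_upd_false {p : ℝ} (hp : 0 < p) (hp1 : 0 < 1 - p) (h : (Fin n → Bool) → ℝ)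
    (i : Fin n) :
    Ep p (fun x => h (Function.update x i false))
      = Ep p (fun x => h x * ((if x i then (0 : ℝ) else 1) / (1 - p))) := by
  rw [← sub_eq_zero]
  unfold Ep
  rw [← Finset.sum_sub_distrib]
  apply flip_zero _ i
  intro x hx
  change (wt p x * _ - wt p x * _) + (wt p (Function.update x i false) * _
    - wt p (Function.update x i false) * _) = 0
  beta_reduce
  rw [wt_false hp x i hx, Function.update_idem]
  simp [hx]
  field_simp
  ring

theorem Ep_sub (p : ℝ) (g h : (Fin n → Bool) → ℝ) :
    Ep p (fun x => g x - h x) = Ep p g - Ep p h := by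
  simp [Ep, mul_sub]

/-- discrete difference in direction `i` -/
def diff (i : Fin n) (g : (Fin n → Bool) → ℝ) : (Fin n → Bool) → ℝ :=
  fun x => g (Function.update x i true) - g (Function.update x i false)

theorem coeff_diff {p : ℝ} (hp : 0 < p) (hp1 : 0 < 1 - p) (g : (Fin n → Bool) → ℝ)
    (i : Fin n) (T : Finset (Fin n)) :
    coeff p (diff i g) T
      = if i ∈ T then 0 else coeff p g (insert i T) / Real.sqrt (p * (1 - p)) := by
  have hs : 0 < Real.sqrt (p * (1 - p)) := Real.sqrt_pos.mpr (mul_pos hp hp1)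
  have hss : Real.sqrt (p * (1 - p)) ^ 2 = p * (1 - p) := Real.sq_sqrt (mul_pos hp hp1).le
  split_ifs with hi
  · unfold coeff Ep
    apply flip_zero _ i
    intro x hx
    change wt p x * _ + wt p (Function.update x i false) * _ = 0
    beta_reduce
    have e : ∀ b, chi p T (Function.update x i b)
        = (((if b then (1 : ℝ) else 0) - p) / Real.sqrt (p * (1 - p))) * chi p (T.erase i) x := by
      intro b
      rw [← chi_update p (T.erase i) x i b (by simp)]
      unfold chi
      rw [← Finset.mul_prod_erase T _ hi]
      simp
    have e1 := e true
    rw [update_true_self x i hx] at e1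
    rw [wt_false hp x i hx, e false, e1]
    simp only [diff, Function.update_idem]
    simp
    field_simp
    ring
  · have h1 : coeff p (diff i g) T
        = Ep p (fun x => (fun y => g y * chi p T y) (Function.update x i true))
          - Ep p (fun x => (fun y => g y * chi p T y) (Function.update x i false)) := by
      rw [← Ep_sub]
      unfold coeff
      congr 1
      funext x
      simp only [diff, chi_update p T x i _ hi]
      ring
    rw [h1, Ep_upd_true hp (fun y => g y * chi p T y), Ep_upd_false hp hp1 (fun y => g y * chi p T y), ← Ep_sub]
    unfold coeff Ep
    rw [Finset.sum_div]
    apply Finset.sum_congr rfl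
    intro x _
    have : chi p (insert i T) x = ((if x i then (1 : ℝ) else 0) - p) / Real.sqrt (p * (1 - p))
        * chi p T x := by
      unfold chi; rw [Finset.prod_insert hi]
    beta_reduce
    rw [this, mul_div_assoc]
    congr 1
    have hr : ∀ a : ℝ, g x * (a / Real.sqrt (p * (1 - p)) * chi p T x) / Real.sqrt (p * (1 - p))
        = g x * chi p T x * (a / (p * (1 - p))) := by
      intro a
      generalize Real.sqrt (p * (1 - p)) = s at hs hss
      rw [← hss]; field_simp
    rw [hr]
    cases x i
    · simp only [Bool.false_eq_true, if_false]; field_simp; ring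
    · simp only [if_true]; field_simp; ring

theorem exists_diff {p : ℝ} (hp : 0 < p) (hp1 : 0 < 1 - p) (f : (Fin n → Bool) → ℝ)
    (hf : ∀ x, ∃ k : ℤ, f x = k) (S : Finset (Fin n)) :
    ∃ g : (Fin n → Bool) → ℝ, (∀ x, ∃ k : ℤ, g x = k) ∧
      ∀ T, coeff p g T = if Disjoint T S
        then coeff p f (T ∪ S) / Real.sqrt (p * (1 - p)) ^ S.card else 0 := by
  induction S using Finset.induction_on with
  | empty => exact ⟨f, hf, by simp⟩
  | insert i S hi ih =>
    obtain ⟨g, hg, hc⟩ := ih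
    refine ⟨diff i g, ?_, ?_⟩
    · intro x
      obtain ⟨a, ha⟩ := hg (Function.update x i true)
      obtain ⟨b, hb⟩ := hg (Function.update x i false)
      exact ⟨a - b, by simp [diff, ha, hb]⟩
    · intro T
      rw [coeff_diff hp hp1, hc, Finset.card_insert_of_notMem hi, Finset.insert_union, Finset.union_insert]
      simp only [Finset.disjoint_insert_left, Finset.disjoint_insert_right]
      by_cases h1 : i ∈ T <;> by_cases h2 : Disjoint T S <;> simp [h1, h2, hi, pow_succ, div_div]

theorem parseval {p : ℝ} (hp : 0 < p) (hp1 : 0 < 1 - p) (g : (Fin n → Bool) → ℝ) :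
    ∑ T, coeff p g T ^ 2 = Ep p (fun x => g x ^ 2) := by
  have hs : 0 < Real.sqrt (p * (1 - p)) := Real.sqrt_pos.mpr (mul_pos hp hp1)
  have hss : Real.sqrt (p * (1 - p)) ^ 2 = p * (1 - p) := Real.sq_sqrt (mul_pos hp hp1).le
  have hw : ∀ x : Fin n → Bool, 0 < wt p x := by
    intro x; unfold wt
    apply Finset.prod_pos; intro i _; split_ifs <;> assumption
  have key : ∀ x y : Fin n → Bool, ∑ T, chi p T x * chi p T y = if x = y then (wt p x)⁻¹ else 0 := by
    intro x y
    have : ∑ T, chi p T x * chi p T y = ∏ i, (1 +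
        (((if x i then (1 : ℝ) else 0) - p) / Real.sqrt (p * (1 - p))) *
        (((if y i then (1 : ℝ) else 0) - p) / Real.sqrt (p * (1 - p)))) := by
      rw [Finset.prod_one_add, Finset.powerset_univ]
      simp only [chi, Finset.prod_mul_distrib]
    rw [this]
    have hr : ∀ a b : ℝ, 1 + a / Real.sqrt (p * (1 - p)) * (b / Real.sqrt (p * (1 - p)))
        = 1 + a * b / (p * (1 - p)) := by
      intro a b; rw [div_mul_div_comm, ← sq, hss]
    simp only [hr]
    split_ifs with hxy
    · subst hxy
      unfold wt
      rw [← Finset.prod_inv_distrib]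
      apply Finset.prod_congr rfl
      intro i _
      cases x i <;> simp <;> field_simp <;> ring
    · obtain ⟨i, hi⟩ := Function.ne_iff.mp hxy
      apply Finset.prod_eq_zero (mem_univ i)
      have hp2 := hp1.ne'
      cases hx : x i <;> cases hy : y i
      · exact absurd (hx.trans hy.symm) hi
      · simp; field_simp; ring
      · simp; field_simp; ring
      · exact absurd (hx.trans hy.symm) hi
  have e : ∀ T, coeff p g T ^ 2
      = ∑ x, ∑ y, wt p x * g x * (wt p y * g y) * (chi p T x * chi p T y) := by
    intro T
    rw [sq]
    unfold coeff Ep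
    rw [Finset.sum_mul_sum]
    apply Finset.sum_congr rfl; intro x _
    apply Finset.sum_congr rfl; intro y _
    simp only [wt]; ring
  simp only [e]
  rw [Finset.sum_comm]
  unfold Ep
  apply Finset.sum_congr rfl; intro x _
  rw [Finset.sum_comm]
  simp only [← Finset.mul_sum, key]
  simp only [mul_ite, mul_zero, Finset.sum_ite_eq, mem_univ, if_true]
  change _ = wt p x * _
  have := (hw x).ne'
  field_simp

theorem coeff_le {p : ℝ} (hp : 0 < p) (hp1 : 0 < 1 - p) (f : (Fin n → Bool) → ℝ)
    (hf : ∀ x, ∃ k : ℤ, f x = k) (S : Finset (Fin n)) :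
    coeff p f S ≤ Real.sqrt (p * (1 - p)) ^ S.card * genInf p S f := by
  have hs : 0 < Real.sqrt (p * (1 - p)) := Real.sqrt_pos.mpr (mul_pos hp hp1)
  have hss : Real.sqrt (p * (1 - p)) ^ 2 = p * (1 - p) := Real.sq_sqrt (mul_pos hp hp1).le
  obtain ⟨g, hg, hc⟩ := exists_diff hp hp1 f hf S
  have h1 : Ep p g = coeff p f S / Real.sqrt (p * (1 - p)) ^ S.card := by
    have := hc ∅
    simp at this
    rw [← this]
    simp [coeff, chi]
  have h2 : Ep p g ≤ Ep p (fun x => g x ^ 2) := by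
    unfold Ep
    apply Finset.sum_le_sum
    intro x _
    apply mul_le_mul_of_nonneg_left
    · obtain ⟨k, hk⟩ := hg x
      beta_reduce
      rw [hk]
      exact_mod_cast Int.le_self_sq k
    · apply Finset.prod_nonneg; intro i _; split_ifs <;> linarith
  have h3 : Ep p (fun x => g x ^ 2) = genInf p S f := by
    rw [← parseval hp hp1]
    unfold genInf
    rw [Finset.sum_div]
    have e : ∀ T, coeff p g T ^ 2 = if Disjoint T S
        then coeff p f (T ∪ S) ^ 2 / (p * (1 - p)) ^ S.card else 0 := by
      intro T
      rw [hc]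
      split_ifs
      · rw [div_pow, ← pow_mul, mul_comm S.card 2, pow_mul, hss]
      · simp
    simp only [e]
    rw [← Finset.sum_filter]
    apply Finset.sum_nbij' (fun T => T ∪ S) (fun T => T \ S)
    · intro T hT; simp
    · intro T hT; simp [Finset.sdiff_disjoint]
    · intro T hT
      simp at hT
      rw [Finset.union_sdiff_right, Finset.sdiff_eq_self_of_disjoint hT]
    · intro T hT
      simp at hT
      exact Finset.sdiff_union_of_subset hT
    · intro T hT; rfl
  rw [h1, h3] at h2
  rw [div_le_iff₀ (by positivity)] at h2
  linarith

theorem Ep_restrict {p : ℝ} (hp : 0 < p) (J : Finset (Fin n)) (f : (Fin n → Bool) → ℝ) :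
    Ep p (restrict1 J f) = Ep p (fun x => f x * ∏ i ∈ J, (if x i then (1 : ℝ) else 0) / p) := by
  induction J using Finset.induction_on generalizing f with
  | empty =>
    have : restrict1 ∅ f = f := by funext x; simp [restrict1]
    simp [this]
  | insert i J hi ih =>
    have e : restrict1 (insert i J) f = restrict1 J (fun x => f (Function.update x i true)) := by
      funext x
      simp only [restrict1]
      congr 1
      funext j
      by_cases h : j = i
      · subst h; simp
      · simp [h, Function.update_of_ne]
    rw [e, ih]
    have e2 : (fun x : Fin n → Bool => f (Function.update x i true)
          * ∏ j ∈ J, (if x j then (1 : ℝ) else 0) / p)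
        = fun x => (fun y : Fin n → Bool => f y * ∏ j ∈ J, (if y j then (1 : ℝ) else 0) / p)
            (Function.update x i true) := by
      funext x
      simp only
      congr 1
      apply Finset.prod_congr rfl
      intro j hj
      rw [Function.update_of_ne]
      rintro rfl; exact hi hj
    rw [e2, Ep_upd_true hp (fun y : Fin n → Bool => f y * ∏ j ∈ J, (if y j then (1 : ℝ) else 0) / p)]
    congr 1
    funext x
    rw [Finset.prod_insert hi]
    ring

theorem Ep_restrict_eq {p : ℝ} (hp : 0 < p) (hp1 : 0 < 1 - p) (J : Finset (Fin n))
    (f : (Fin n → Bool) → ℝ) :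
    Ep p (restrict1 J f)
      = ∑ S ∈ J.powerset, ((1 - p) / Real.sqrt (p * (1 - p))) ^ S.card * coeff p f S := by
  have hs : 0 < Real.sqrt (p * (1 - p)) := Real.sqrt_pos.mpr (mul_pos hp hp1)
  have hss : Real.sqrt (p * (1 - p)) ^ 2 = p * (1 - p) := Real.sq_sqrt (mul_pos hp hp1).le
  rw [Ep_restrict hp]
  have e : ∀ x : Fin n → Bool, ∏ i ∈ J, (if x i then (1 : ℝ) else 0) / p
      = ∑ S ∈ J.powerset, ((1 - p) / Real.sqrt (p * (1 - p))) ^ S.card * chi p S x := by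
    intro x
    have : ∀ i, (if x i then (1 : ℝ) else 0) / p = 1 + (1 - p) / Real.sqrt (p * (1 - p)) *
        (((if x i then (1 : ℝ) else 0) - p) / Real.sqrt (p * (1 - p))) := by
      intro i
      rw [div_mul_div_comm, ← sq, hss]
      field_simp
      ring
    simp only [this]
    rw [Finset.prod_one_add]
    simp only [chi, Finset.prod_mul_distrib, Finset.prod_const]
  simp only [e]
  unfold coeff Ep
  simp only [Finset.mul_sum]
  rw [Finset.sum_comm]
  apply Finset.sum_congr rfl; intro S _
  apply Finset.sum_congr rfl; intro x _
  ring

/-- small generalised influences imply globalness. -/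
theorem statement6 {n : ℕ} (p δ : ℝ) (r : ℕ) (hp : 0 < p) (hp' : p ≤ 1/2)
    (hr : 1 ≤ r) (hδ : 0 < δ)
    (f : (Fin n → Bool) → ℝ) (hbool : ∀ x, f x = 0 ∨ f x = 1)
    (hinf : ∀ S : Finset (Fin n), S.Nonempty → S.card ≤ r → genInf p S f ≤ δ) :
    IsGlobal p (r : ℝ) (4 ^ r * δ) f := by
  have hp1 : 0 < 1 - p := by linarith
  have hs : 0 < Real.sqrt (p * (1 - p)) := Real.sqrt_pos.mpr (mul_pos hp hp1)
  have hf : ∀ x, ∃ k : ℤ, f x = k := by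
    intro x
    rcases hbool x with h | h
    · exact ⟨0, by simp [h]⟩
    · exact ⟨1, by simp [h]⟩
  intro J hJ
  have hJ' : J.card ≤ r := by exact_mod_cast hJ
  rw [Ep_restrict_eq hp hp1, ← Finset.add_sum_erase _ _ (Finset.empty_mem_powerset J)]
  have h0 : ((1 - p) / Real.sqrt (p * (1 - p))) ^ (∅ : Finset (Fin n)).card * coeff p f ∅
      = Ep p f := by
    simp [coeff, chi]
  rw [h0]
  apply add_le_add le_rfl
  calc _ ≤ ∑ S ∈ J.powerset.erase ∅, δ := by
        apply Finset.sum_le_sum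
        intro S hS
        simp only [Finset.mem_erase, Finset.mem_powerset] at hS
        have hI := hinf S (Finset.nonempty_iff_ne_empty.mpr hS.1)
          ((Finset.card_le_card hS.2).trans hJ')
        have hc := coeff_le hp hp1 f hf S
        calc _ ≤ ((1 - p) / Real.sqrt (p * (1 - p))) ^ S.card *
              (Real.sqrt (p * (1 - p)) ^ S.card * δ) := by
              apply mul_le_mul_of_nonneg_left _ (by positivity)
              exact hc.trans (mul_le_mul_of_nonneg_left hI (by positivity))
          _ = (1 - p) ^ S.card * δ := by
              rw [div_pow]; field_simp
          _ ≤ 1 * δ := by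
              apply mul_le_mul_of_nonneg_right _ hδ.le
              exact pow_le_one₀ hp1.le (by linarith)
          _ = δ := one_mul δ
    _ ≤ ∑ S ∈ J.powerset, δ :=
        Finset.sum_le_sum_of_subset_of_nonneg (Finset.erase_subset _ _) (fun _ _ _ => hδ.le)
    _ = 2 ^ J.card * δ := by simp [Finset.card_powerset]
    _ ≤ 4 ^ r * δ := by
        apply mul_le_mul_of_nonneg_right _ hδ.le
        calc (2 : ℝ) ^ J.card ≤ 2 ^ r := pow_le_pow_right₀ (by norm_num) hJ'
          _ ≤ 4 ^ r := pow_le_pow_left₀ (by norm_num) (by norm_num) r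

end GlobalHC
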